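/- Let α ∈ (0,1), ϱ ≥ 1, t > 0 and x > 0. Then: (a) a_k(t,x) > 0 for every integer k ≥ 0; (b) a_k(t,x) → 0 as k → ∞; (c) a_{k+1}(t,x) < a_k(t,x) for every integer k ≥ 1, and 2 a_0(t,x) > a_1(t,x). -/

import Mathlib

open Real MeasureTheory Filter Topology intervalIntegral

/-- The two-parameter Mittag-Leffler function `E_{α,β}(z) = ∑ z^n / Γ(αn+β)`. -/
noncomputable def ML (a b z : ℝ) : ℝ :=
  ∑' n : ℕ, z ^ n / Real.Gamma (a * n + b)

/-- The coefficients `a_k(t,x)` of the alternating-series decomposition of `u_{α,ϱ}`. -/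
noncomputable def aCoef (α ϱ t x : ℝ) (k : ℕ) : ℝ :=
  if k = 0 then
    ∫ ξ in (0 : ℝ)..(Real.pi / (2 * x)), ML α 1 (t ^ α * (1 - ξ ^ (2 * ϱ))) * Real.cos (x * ξ)
  else
    (-1 : ℝ) ^ k * ∫ ξ in ((2 * (k : ℝ) - 1) * Real.pi / (2 * x))..
        ((2 * (k : ℝ) + 1) * Real.pi / (2 * x)),
      ML α 1 (t ^ α * (1 - ξ ^ (2 * ϱ))) * Real.cos (x * ξ)

/-!
Up to the factor `t^(b-1)`, the function `E_{a,b}(l t^a)` is a superposition of Riemann–Liouville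
kernels, so that `w t^(a-1) E_{a,a}(-w t^a)` is the Volterra resolvent of the kernel
`w t^(a-1) / Γ(a)`. For `0 < a ≤ 1` this kernel is log-convex, and the resolvent of a log-convex
kernel is positive. Hence `E_{a,a} > 0`, which makes `E_a`, whose derivative is `E_{a,a} / a`,
strictly increasing; fractional integration then gives `E_a > 0` and a bound showing `E_a → 0` at
`-∞`. The profile `ξ ↦ E_α(t^α (1 - ξ^{2ϱ}))` is therefore positive, strictly decreasing on
`[0, ∞)` and tends to `0`. Translating the arches of `cos (x ξ)` onto the one centred at the origin,
over which the even extension of the profile contributes `2 a_0`, reduces all claims to a comparison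
of integrands.
-/

section Gamma

variable {a : ℝ}

lemma sub_one_rpow_mul_Gamma_le_Gamma_add {x : ℝ} (ha : 0 < a) (hx : 1 < x) :
    (x - 1) ^ a * Gamma x ≤ Gamma (x + a) := by
  have hx1 : 0 < x - 1 := by linarith
  have hG1 := Gamma_pos_of_pos hx1
  have hGx : Gamma x = (x - 1) * Gamma (x - 1) := by
    simpa using Gamma_add_one hx1.ne'
  have hslope : log (x - 1) ≤ (log (Gamma (x + a)) - log (Gamma x)) / a := by
    have h := convexOn_log_Gamma.slope_mono_adjacent (x := x - 1) (y := x) (z := x + a)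
      hx1 (by simp only [Set.mem_Ioi]; linarith) (by linarith) (by linarith)
    simpa [hGx, log_mul hx1.ne' hG1.ne'] using h
  rw [le_div_iff₀ ha] at hslope
  have hGx_pos := Gamma_pos_of_pos (by linarith : 0 < x)
  rw [← log_le_log_iff (by positivity) (Gamma_pos_of_pos (by linarith)),
    log_mul (by positivity) hGx_pos.ne', log_rpow hx1]
  linarith

lemma tendsto_Gamma_div_Gamma_add (ha : 0 < a) :
    Tendsto (fun x => Gamma x / Gamma (x + a)) atTop (𝓝 0) := by
  have hlim : Tendsto (fun x : ℝ => (x - 1) ^ (-a)) atTop (𝓝 0) :=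
    (tendsto_rpow_neg_atTop ha).comp (tendsto_atTop_add_const_right _ (-1) tendsto_id)
  refine squeeze_zero' ?_ ?_ hlim
  · filter_upwards [eventually_gt_atTop 0] with x hx
    exact div_nonneg (Gamma_pos_of_pos hx).le (Gamma_pos_of_pos (by linarith)).le
  · filter_upwards [eventually_gt_atTop 1] with x hx
    have hx1 : 0 < x - 1 := by linarith
    rw [div_le_iff₀ (Gamma_pos_of_pos (by linarith)), rpow_neg hx1.le,
      le_inv_mul_iff₀ (by positivity)]
    exact sub_one_rpow_mul_Gamma_le_Gamma_add ha hx

end Gamma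

section MittagLeffler

variable {a : ℝ}

lemma summable_ML (ha : 0 < a) (b z : ℝ) :
    Summable fun n : ℕ => z ^ n / Gamma (a * n + b) := by
  have harg : Tendsto (fun n : ℕ => a * (n : ℝ) + b) atTop atTop :=
    tendsto_atTop_add_const_right _ _ (tendsto_natCast_atTop_atTop.const_mul_atTop ha)
  have hratio : Tendsto (fun n : ℕ => |z| * (Gamma (a * n + b) / Gamma (a * n + b + a)))
      atTop (𝓝 0) := by
    simpa using ((tendsto_Gamma_div_Gamma_add ha).comp harg).const_mul |z|
  refine summable_of_ratio_norm_eventually_le (r := 1 / 2) (by norm_num) ?_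
  filter_upwards [hratio.eventually_le_const (by norm_num : (0 : ℝ) < 1 / 2),
    harg.eventually_gt_atTop 0] with n hn hpos
  have hG := Gamma_pos_of_pos hpos
  have hG' := Gamma_pos_of_pos (add_pos hpos ha)
  have hsucc : a * ((n + 1 : ℕ) : ℝ) + b = a * n + b + a := by push_cast; ring
  calc ‖z ^ (n + 1) / Gamma (a * ((n + 1 : ℕ) : ℝ) + b)‖
      = |z| * (Gamma (a * n + b) / Gamma (a * n + b + a)) * ‖z ^ n / Gamma (a * n + b)‖ := by
        rw [hsucc, norm_div, norm_div, norm_pow, norm_pow, norm_of_nonneg hG.le,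
          norm_of_nonneg hG'.le, norm_eq_abs]
        field_simp
        ring
    _ ≤ 1 / 2 * ‖z ^ n / Gamma (a * n + b)‖ := by gcongr

lemma continuous_ML (ha : 0 < a) (b : ℝ) : Continuous (ML a b) := by
  refine continuous_iff_continuousAt.2 fun z => ?_
  have hball : ContinuousOn (ML a b) (Metric.closedBall 0 (|z| + 1)) := by
    refine continuousOn_tsum (fun n => by fun_prop) (summable_ML ha b (|z| + 1)).norm
      fun n y hy => ?_
    have hy' : |y| ≤ |(|z| + 1)| := (mem_closedBall_zero_iff.1 hy).trans (le_abs_self _)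
    simp only [norm_div, norm_pow, norm_eq_abs]
    gcongr
  exact hball.continuousAt (Metric.closedBall_mem_nhds_of_mem (by simp))

lemma succ_div_Gamma_mul_succ_add_one (ha : 0 < a) (n : ℕ) :
    ((n : ℝ) + 1) / Gamma (a * ((n : ℝ) + 1) + 1) = (a * Gamma (a * n + a))⁻¹ := by
  have h0 : 0 < a * ((n : ℝ) + 1) := by positivity
  have := Gamma_pos_of_pos h0
  rw [Gamma_add_one h0.ne', ← mul_add_one]
  field_simp

lemma hasSum_deriv_ML_one (ha : 0 < a) (z : ℝ) :
    HasSum (fun n : ℕ => n * z ^ (n - 1) / Gamma (a * n + 1)) (ML a a z / a) := by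
  rw [← hasSum_nat_add_iff' 1]
  simp only [Finset.range_one, Finset.sum_singleton, Nat.cast_zero, zero_mul, zero_div, sub_zero,
    Nat.add_sub_cancel, Nat.cast_add, Nat.cast_one]
  refine ((summable_ML ha a z).hasSum.div_const a).congr_fun fun n => ?_
  rw [mul_comm, mul_div_assoc, succ_div_Gamma_mul_succ_add_one ha]
  ring

lemma hasDerivAt_ML_one (ha : 0 < a) (z : ℝ) : HasDerivAt (ML a 1) (ML a a z / a) z := by
  rw [← (hasSum_deriv_ML_one ha z).tsum_eq]
  have hz : z ∈ Metric.ball 0 (|z| + 1) := by simp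
  refine hasDerivAt_tsum_of_isPreconnected (g := fun (n : ℕ) y => y ^ n / Gamma (a * n + 1))
    (hasSum_deriv_ML_one ha (|z| + 1)).summable.norm Metric.isOpen_ball
    (convex_ball _ _).isPreconnected (fun n y _ => (hasDerivAt_pow n y).div_const _)
    (fun n y hy => ?_) hz (summable_ML ha 1 z) hz
  have hy' : |y| ≤ |(|z| + 1)| := (mem_ball_zero_iff.1 hy).le.trans (le_abs_self _)
  simp only [norm_div, norm_mul, norm_pow, norm_eq_abs]
  gcongr

end MittagLeffler

section RiemannLiouville

variable {a b c p q t : ℝ}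

/-- The Riemann–Liouville kernel `g_p(t) = t^(p-1) / Γ(p)`: convolution with `g_p` on `(0, t)` is
fractional integration of order `p`. -/
noncomputable def rlKernel (p t : ℝ) : ℝ :=
  t ^ (p - 1) / Gamma p

lemma rlKernel_one (t : ℝ) : rlKernel 1 t = 1 := by
  simp [rlKernel]

lemma rlKernel_one_right (p : ℝ) : rlKernel p 1 = (Gamma p)⁻¹ := by
  simp [rlKernel]

lemma rlKernel_pos (hp : 0 < p) (ht : 0 < t) : 0 < rlKernel p t :=
  div_pos (rpow_pos_of_pos ht _) (Gamma_pos_of_pos hp)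

lemma integral_rpow_mul_sub_rpow (hp : 0 < p) (hq : 0 < q) (ht : 0 < t) :
    ∫ s in 0..t, s ^ (p - 1) * (t - s) ^ (q - 1) =
      t ^ (p + q - 1) * (Gamma p * Gamma q / Gamma (p + q)) := by
  have hbeta := Complex.betaIntegral_scaled p q ht
  rw [Complex.betaIntegral_eq_Gamma_mul_div _ _ (by simpa) (by simpa)] at hbeta
  have hcast : ∫ s in 0..t, (s : ℂ) ^ ((p : ℂ) - 1) * ((t : ℂ) - s) ^ ((q : ℂ) - 1) =
      (∫ s in 0..t, s ^ (p - 1) * (t - s) ^ (q - 1) : ℝ) := by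
    rw [← intervalIntegral.integral_ofReal]
    refine integral_congr fun s hs => ?_
    rw [Set.uIcc_of_le ht.le] at hs
    push_cast [Complex.ofReal_cpow hs.1, Complex.ofReal_cpow (sub_nonneg.2 hs.2)]
    rfl
  apply Complex.ofReal_injective
  rw [← hcast, hbeta]
  push_cast [Complex.ofReal_cpow ht.le, ← Complex.Gamma_ofReal]
  rfl

lemma integral_rlKernel_mul_rlKernel (hp : 0 < p) (hq : 0 < q) (ht : 0 < t) :
    ∫ s in 0..t, rlKernel p s * rlKernel q (t - s) = rlKernel (p + q) t := by
  have := Gamma_pos_of_pos hp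
  have := Gamma_pos_of_pos hq
  simp only [rlKernel, div_mul_div_comm, intervalIntegral.integral_div]
  rw [integral_rpow_mul_sub_rpow hp hq ht]
  field_simp

lemma intervalIntegrable_rlKernel_mul_rlKernel (hp : 0 < p) (hq : 0 < q) (ht : 0 < t) :
    IntervalIntegrable (fun s => rlKernel p s * rlKernel q (t - s)) volume 0 t :=
  intervalIntegrable_of_integral_ne_zero <| by
    rw [integral_rlKernel_mul_rlKernel hp hq ht]
    exact (rlKernel_pos (add_pos hp hq) ht).ne'

lemma intervalIntegrable_rlKernel (hp : 0 < p) (t : ℝ) :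
    IntervalIntegrable (rlKernel p) volume 0 t :=
  (intervalIntegrable_rpow' (by linarith)).div_const _

lemma convexOn_log_rlKernel (hp : 0 < p) (hp1 : p ≤ 1) :
    ConvexOn ℝ (Set.Ioi 0) (log ∘ rlKernel p) := by
  have hlog : ConvexOn ℝ (Set.Ioi 0) fun t => (1 - p) * -log t + -log (Gamma p) :=
    (strictConcaveOn_log_Ioi.concaveOn.neg.smul (sub_nonneg.2 hp1)).add_const _
  refine hlog.congr fun t ht => ?_
  have ht' : 0 < t := ht
  simp only [Function.comp_apply, rlKernel]
  rw [log_div (rpow_pos_of_pos ht' _).ne' (Gamma_pos_of_pos hp).ne', log_rpow ht']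
  ring

/-- The Mittag-Leffler kernel `t^(b-1) E_{a,b}(l t^a)`, which for `t > 0` is the superposition
`∑ l^n g_{an+b}(t)` of Riemann–Liouville kernels. -/
noncomputable def mlKernel (a b l t : ℝ) : ℝ :=
  t ^ (b - 1) * ML a b (l * t ^ a)

lemma mlKernel_one_right (a b l : ℝ) : mlKernel a b l 1 = ML a b l := by
  simp [mlKernel]

lemma mlKernel_one (a l t : ℝ) : mlKernel a 1 l t = ML a 1 (l * t ^ a) := by
  simp [mlKernel]

lemma hasSum_mlKernel (ha : 0 < a) (b l : ℝ) (ht : 0 < t) :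
    HasSum (fun n : ℕ => l ^ n * rlKernel (a * n + b) t) (mlKernel a b l t) := by
  refine ((summable_ML ha b (l * t ^ a)).hasSum.mul_left (t ^ (b - 1))).congr_fun fun n => ?_
  have hpow : t ^ (a * n + b - 1) = t ^ (b - 1) * (t ^ a) ^ n := by
    rw [← rpow_natCast, ← rpow_mul ht.le, ← rpow_add ht]
    congr 1
    ring
  rw [rlKernel, hpow, mul_pow]
  ring

lemma mlKernel_eq_rlKernel_add (ha : 0 < a) (b l : ℝ) (ht : 0 < t) :
    mlKernel a b l t = rlKernel b t + l * mlKernel a (b + a) l t := by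
  refine (hasSum_mlKernel ha b l ht).unique ?_
  rw [← hasSum_nat_add_iff' 1]
  simp only [Finset.range_one, Finset.sum_singleton, Nat.cast_zero, mul_zero, zero_add, pow_zero,
    one_mul, add_sub_cancel_left]
  refine ((hasSum_mlKernel ha (b + a) l ht).mul_left l).congr_fun fun n => ?_
  rw [pow_succ', mul_assoc]
  congr 3
  push_cast
  ring

lemma continuousOn_mlKernel (ha : 0 < a) (b l : ℝ) :
    ContinuousOn (mlKernel a b l) (Set.Ioi 0) :=
  (continuousOn_id.rpow_const fun _ ht => .inl (ne_of_gt ht)).mul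
    ((continuous_ML ha b).comp (continuous_const.mul (continuous_rpow_const ha.le))).continuousOn

lemma intervalIntegrable_mlKernel_mul_rlKernel (ha : 0 < a) (hb : 0 < b) (hc : 0 < c) (l : ℝ)
    (ht : 0 < t) :
    IntervalIntegrable (fun s => mlKernel a b l s * rlKernel c (t - s)) volume 0 t := by
  have hML : Continuous fun s => Gamma b * ML a b (l * s ^ a) :=
    continuous_const.mul
      ((continuous_ML ha b).comp (continuous_const.mul (continuous_rpow_const ha.le)))
  refine ((intervalIntegrable_rlKernel_mul_rlKernel hb hc ht).mul_continuousOn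
    hML.continuousOn).congr fun s _ => ?_
  have := (Gamma_pos_of_pos hb).ne'
  simp only [mlKernel, rlKernel]
  field_simp

lemma integral_mlKernel_mul_rlKernel (ha : 0 < a) (hb : 0 < b) (hc : 0 < c) (l : ℝ)
    (ht : 0 < t) :
    ∫ s in 0..t, mlKernel a b l s * rlKernel c (t - s) = mlKernel a (b + c) l t := by
  have hn (n : ℕ) : 0 < a * n + b := by positivity
  have hterm (m : ℝ) (n : ℕ) :
      ∫ s in Set.Ioc 0 t, m ^ n * (rlKernel (a * n + b) s * rlKernel c (t - s)) =
        m ^ n * rlKernel (a * n + (b + c)) t := by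
    rw [← intervalIntegral.integral_of_le ht.le, intervalIntegral.integral_const_mul,
      integral_rlKernel_mul_rlKernel (hn n) hc ht, add_assoc]
  have hint (n : ℕ) : IntegrableOn
      (fun s => l ^ n * (rlKernel (a * n + b) s * rlKernel c (t - s))) (Set.Ioc 0 t) :=
    ((intervalIntegrable_iff_integrableOn_Ioc_of_le ht.le).1
      (intervalIntegrable_rlKernel_mul_rlKernel (hn n) hc ht)).const_mul _
  have hnorm (n : ℕ) :
      ∫ s in Set.Ioc 0 t, ‖l ^ n * (rlKernel (a * n + b) s * rlKernel c (t - s))‖ =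
        |l| ^ n * rlKernel (a * n + (b + c)) t := by
    rw [← hterm, integral_Ioc_eq_integral_Ioo, integral_Ioc_eq_integral_Ioo]
    refine setIntegral_congr_fun measurableSet_Ioo fun s hs => ?_
    have := rlKernel_pos (hn n) hs.1
    have := rlKernel_pos hc (sub_pos.2 hs.2)
    rw [norm_mul, norm_pow, norm_eq_abs, norm_of_nonneg (by positivity)]
  have hsum := hasSum_integral_of_summable_integral_norm hint <| by
    simpa only [hnorm] using (hasSum_mlKernel ha (b + c) |l| ht).summable
  simp only [hterm] at hsum
  rw [(hasSum_mlKernel ha (b + c) l ht).unique hsum, intervalIntegral.integral_of_le ht.le]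
  refine setIntegral_congr_fun measurableSet_Ioc fun s hs => ?_
  simp only [← mul_assoc, ((hasSum_mlKernel ha b l hs.1).mul_right _).tsum_eq]

end RiemannLiouville

section Volterra

lemma add_le_add_of_convexOn {φ : ℝ → ℝ} {S : Set ℝ} (hφ : ConvexOn ℝ S φ) {x y h : ℝ}
    (hx : x ∈ S) (hyh : y + h ∈ S) (hxy : x < y) (hh : 0 < h) :
    φ (x + h) + φ y ≤ φ x + φ (y + h) := by
  have hy := hφ.secant_mono_aux1 hx hyh hxy (lt_add_of_pos_right y hh)
  have hxh := hφ.secant_mono_aux1 hx hyh (lt_add_of_pos_right x hh) (add_lt_add_left hxy h)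
  refine le_of_mul_le_mul_left ?_ (by linarith : 0 < y + h - x)
  linarith

section LogConvex

variable {k : ℝ → ℝ}

lemma mul_le_mul_of_convexOn_log (hk : ∀ t, 0 < t → 0 < k t)
    (hlog : ConvexOn ℝ (Set.Ioi 0) (log ∘ k)) {x y h : ℝ} (hx : 0 < x) (hxy : x < y)
    (hh : 0 < h) : k (x + h) * k y ≤ k x * k (y + h) := by
  have hy : 0 < y := hx.trans hxy
  have hkx := hk x hx
  have hky := hk y hy
  have hkxh := hk (x + h) (by positivity)
  have hkyh := hk (y + h) (by positivity)
  have hadd := add_le_add_of_convexOn hlog hx (add_pos hy hh) hxy hh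
  simp only [Function.comp_apply] at hadd
  rwa [← log_mul hkxh.ne' hky.ne', ← log_mul hkx.ne' hkyh.ne',
    log_le_log_iff (by positivity) (by positivity)] at hadd

lemma continuousOn_of_convexOn_log (hk : ∀ t, 0 < t → 0 < k t)
    (hlog : ConvexOn ℝ (Set.Ioi 0) (log ∘ k)) : ContinuousOn k (Set.Ioi 0) :=
  (continuous_exp.comp_continuousOn (hlog.continuousOn isOpen_Ioi)).congr
    fun t ht => (exp_log (hk t ht)).symm

end LogConvex

lemma exists_first_nonpos {v : ℝ → ℝ} (hv : ContinuousOn v (Set.Ioi 0))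
    (hv0 : ∀ᶠ s in 𝓝[>] 0, 0 < v s) {t : ℝ} (ht : 0 < t) (hvt : v t ≤ 0) :
    ∃ t₀, 0 < t₀ ∧ v t₀ ≤ 0 ∧ ∀ s ∈ Set.Ioo 0 t₀, 0 < v s := by
  obtain ⟨ε, hε, hpos⟩ := mem_nhdsGT_iff_exists_Ioo_subset.1 hv0
  replace hε : 0 < ε := hε
  have hεt : ε ≤ t := by
    by_contra! h
    exact hvt.not_gt (hpos ⟨ht, h⟩)
  have hcont : ContinuousOn v (Set.Icc ε t) :=
    hv.mono fun s hs => hε.trans_le hs.1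
  have hcompact : IsCompact (Set.Icc ε t ∩ v ⁻¹' Set.Iic 0) :=
    isCompact_Icc.of_isClosed_subset (hcont.preimage_isClosed_of_isClosed isClosed_Icc isClosed_Iic)
      Set.inter_subset_left
  obtain ⟨t₀, ⟨ht₀, hvt₀⟩, hmin⟩ := hcompact.exists_isLeast ⟨t, ⟨hεt, le_rfl⟩, hvt⟩
  refine ⟨t₀, hε.trans_le ht₀.1, hvt₀, fun s hs => ?_⟩
  by_contra! hvs
  have hεs : ε ≤ s := by
    by_contra! h
    exact hvs.not_gt (hpos ⟨hs.1, h⟩)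
  exact hs.2.not_ge (hmin ⟨⟨hεs, hs.2.le.trans ht₀.2⟩, hvs⟩)

variable {k r : ℝ → ℝ}

/-- `r` is the resolvent of the Volterra kernel `k` on `(0, ∞)`: the convolution `r ∗ k` converges
and `r + r ∗ k = k`. -/
structure IsVolterraResolvent (k r : ℝ → ℝ) : Prop where
  intervalIntegrable : ∀ t, 0 < t →
    IntervalIntegrable (fun s => r s * k (t - s)) volume 0 t
  add_integral_eq : ∀ t, 0 < t → r t + ∫ s in 0..t, r s * k (t - s) = k t

-- Log-convexity makes `s ↦ k (t₀ - s) / k (t₁ - s)` antitone, hence at most `k t₀ / k t₁`;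
-- comparing the resolvent equations at `t₀` and `t₁` leaves only the integral over `(t₁, t₀)`.
lemma IsVolterraResolvent.mul_le_mul_add_integral (hr : IsVolterraResolvent k r)
    (hk : ∀ t, 0 < t → 0 < k t) (hlog : ConvexOn ℝ (Set.Ioi 0) (log ∘ k)) {t₀ t₁ : ℝ}
    (ht₁ : 0 < t₁) (ht : t₁ < t₀) (hpos : ∀ s ∈ Set.Ioo 0 t₁, 0 ≤ r s) :
    k t₀ * r t₁ ≤ k t₁ * (r t₀ + ∫ s in t₁..t₀, r s * k (t₀ - s)) := by
  have ht₀ : 0 < t₀ := ht₁.trans ht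
  have hint := hr.intervalIntegrable t₀ ht₀
  have hmem : t₁ ∈ Set.uIcc 0 t₀ := Set.mem_uIcc_of_le ht₁.le ht.le
  have hint₁ := hint.mono_set (Set.uIcc_subset_uIcc_left hmem)
  have hint₂ := hint.mono_set (Set.uIcc_subset_uIcc_right hmem)
  have hcompare : k t₁ * ∫ s in 0..t₁, r s * k (t₀ - s) ≤
      k t₀ * ∫ s in 0..t₁, r s * k (t₁ - s) := by
    rw [← intervalIntegral.integral_const_mul, ← intervalIntegral.integral_const_mul]
    refine integral_mono_on_of_le_Ioo ht₁.le (hint₁.const_mul _)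
      ((hr.intervalIntegrable t₁ ht₁).const_mul _) fun s hs => ?_
    have hkernel := mul_le_mul_of_convexOn_log hk hlog (sub_pos.2 hs.2) (sub_lt_self t₁ hs.1)
      (sub_pos.2 ht)
    simp only [add_sub_cancel, sub_add_sub_cancel'] at hkernel
    have := mul_le_mul_of_nonneg_left hkernel (hpos s hs)
    linarith
  have hsplit := integral_add_adjacent_intervals hint₁ hint₂
  have heq₀ := hr.add_integral_eq t₀ ht₀
  have heq₁ := hr.add_integral_eq t₁ ht₁
  have hrewrite₁ : ∫ s in 0..t₁, r s * k (t₁ - s) = k t₁ - r t₁ := by linarith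
  have hrewrite₀ : ∫ s in 0..t₁, r s * k (t₀ - s) =
      k t₀ - r t₀ - ∫ s in t₁..t₀, r s * k (t₀ - s) := by linarith
  rw [hrewrite₀, hrewrite₁] at hcompare
  linarith

lemma eventually_mul_integral_lt {t₀ : ℝ} (ht₀ : 0 < t₀) (hk₀ : 0 < k t₀)
    (hcont : ContinuousAt k t₀) (hint : IntervalIntegrable k volume 0 t₀) :
    ∀ᶠ t₁ in 𝓝[≤] t₀, k t₁ * ∫ s in 0..(t₀ - t₁), k s < k t₀ := by
  have hprim : Tendsto (fun u => ∫ s in 0..u, k s) (𝓝[≥] 0) (𝓝 0) := by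
    have h := continuousWithinAt_primitive (μ := volume) (f := k) (a := 0) (b₁ := 0) (b₂ := t₀)
      (measure_singleton 0) (by simpa [ht₀.le] using hint)
    rwa [ContinuousWithinAt, integral_same, nhdsWithin_Icc_eq_nhdsGE ht₀] at h
  have hsub : Tendsto (fun t₁ => t₀ - t₁) (𝓝[≤] t₀) (𝓝[≥] 0) :=
    tendsto_nhdsWithin_iff.2 ⟨((continuous_const.sub continuous_id).tendsto' t₀ 0
      (sub_self t₀)).mono_left nhdsWithin_le_nhds,
      eventually_mem_nhdsWithin.mono fun t₁ (h : t₁ ≤ t₀) => sub_nonneg.2 h⟩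
  have hlim := (hcont.tendsto.mono_left nhdsWithin_le_nhds).mul (hprim.comp hsub)
  rw [mul_zero] at hlim
  exact hlim.eventually_lt_const hk₀

lemma integral_mul_comp_sub_le {M t₀ t₁ : ℝ} (ht : t₁ ≤ t₀)
    (hint : IntervalIntegrable (fun s => r s * k (t₀ - s)) volume t₁ t₀)
    (hkint : IntervalIntegrable k volume 0 (t₀ - t₁)) (hk : ∀ s, 0 < s → 0 ≤ k s)
    (hr : ∀ s ∈ Set.Ioo t₁ t₀, r s ≤ M) :
    ∫ s in t₁..t₀, r s * k (t₀ - s) ≤ M * ∫ s in 0..(t₀ - t₁), k s := by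
  have hshift : ∫ s in t₁..t₀, k (t₀ - s) = ∫ s in 0..(t₀ - t₁), k s := by
    rw [integral_comp_sub_left k, sub_self]
  have hkint' : IntervalIntegrable (fun s => k (t₀ - s)) volume t₁ t₀ := by
    simpa using (hkint.comp_sub_left t₀).symm
  rw [← hshift, ← intervalIntegral.integral_const_mul]
  exact integral_mono_on_of_le_Ioo ht hint (hkint'.const_mul _)
    fun s hs => mul_le_mul_of_nonneg_right (hr s hs) (hk _ (sub_pos.2 hs.2))

-- At the maximum `t₁` of `r` just before its first zero `t₀`, the integral over `(t₁, t₀)` in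
-- `mul_le_mul_add_integral` is too small to balance `r t₁`.
theorem IsVolterraResolvent.pos (hr : IsVolterraResolvent k r)
    (hk : ∀ t, 0 < t → 0 < k t) (hlog : ConvexOn ℝ (Set.Ioi 0) (log ∘ k))
    (hkint : ∀ t, 0 < t → IntervalIntegrable k volume 0 t)
    (hrcont : ContinuousOn r (Set.Ioi 0)) (hr0 : ∀ᶠ s in 𝓝[>] 0, 0 < r s) {t : ℝ} (ht : 0 < t) :
    0 < r t := by
  by_contra! hneg
  obtain ⟨t₀, ht₀, hrt₀, hpos⟩ := exists_first_nonpos hrcont hr0 ht hneg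
  have hsmall := eventually_mul_integral_lt ht₀ (hk t₀ ht₀)
    ((continuousOn_of_convexOn_log hk hlog).continuousAt (Ioi_mem_nhds ht₀)) (hkint t₀ ht₀)
  obtain ⟨u, ⟨hu, hut₀⟩, hsmall⟩ :=
    (mem_nhdsLE_iff_exists_mem_Ico_Ioc_subset ht₀).1 hsmall
  obtain ⟨d, hud, hdt₀⟩ := exists_between hut₀
  have hd : 0 < d := hu.trans_lt hud
  obtain ⟨t₁, ⟨hdt₁, ht₁le⟩, hmax⟩ := isCompact_Icc.exists_isMaxOn
    (Set.nonempty_Icc.2 hdt₀.le) (hrcont.mono fun s hs => hd.trans_le hs.1)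
  have hrt₁ : 0 < r t₁ := (hpos d ⟨hd, hdt₀⟩).trans_le (hmax ⟨le_rfl, hdt₀.le⟩)
  have ht₁ : t₁ < t₀ := ht₁le.lt_of_ne fun h => hrt₀.not_gt (h ▸ hrt₁)
  have ht₁pos : 0 < t₁ := hd.trans_le hdt₁
  have hlt : k t₁ * ∫ s in 0..(t₀ - t₁), k s < k t₀ := hsmall ⟨hud.trans_le hdt₁, ht₁le⟩
  refine lt_irrefl (k t₀ * r t₁) ?_
  calc k t₀ * r t₁
      ≤ k t₁ * (r t₀ + ∫ s in t₁..t₀, r s * k (t₀ - s)) :=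
        hr.mul_le_mul_add_integral hk hlog ht₁pos ht₁
          fun s hs => (hpos s ⟨hs.1, hs.2.trans ht₁⟩).le
    _ ≤ k t₁ * (0 + r t₁ * ∫ s in 0..(t₀ - t₁), k s) := by
        have := hk t₁ ht₁pos
        gcongr
        exact integral_mul_comp_sub_le ht₁.le
          ((hr.intervalIntegrable t₀ ht₀).mono_set (Set.uIcc_subset_uIcc_right
            (Set.mem_uIcc_of_le ht₁pos.le ht₁.le)))
          (hkint _ (sub_pos.2 ht₁)) (fun s hs => (hk s hs).le)
          fun s hs => hmax ⟨hdt₁.trans hs.1.le, hs.2.le⟩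
    _ = (k t₁ * ∫ s in 0..(t₀ - t₁), k s) * r t₁ := by ring
    _ < k t₀ * r t₁ := by gcongr

end Volterra

section Positivity

variable {a b t : ℝ}

lemma isVolterraResolvent_mlKernel (ha : 0 < a) (w : ℝ) :
    IsVolterraResolvent (fun t => w * rlKernel a t) (fun t => w * mlKernel a a (-w) t) where
  intervalIntegrable t ht := by
    simpa only [mul_mul_mul_comm] using
      (intervalIntegrable_mlKernel_mul_rlKernel ha ha ha (-w) ht).const_mul (w * w)
  add_integral_eq t ht := by
    simp only [mul_mul_mul_comm w, intervalIntegral.integral_const_mul]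
    rw [integral_mlKernel_mul_rlKernel ha ha ha (-w) ht, mlKernel_eq_rlKernel_add ha a (-w) ht]
    ring

lemma eventually_mlKernel_pos (ha : 0 < a) (hb : 0 < b) (l : ℝ) :
    ∀ᶠ t in 𝓝[>] 0, 0 < mlKernel a b l t := by
  have hzero : ML a b (l * 0 ^ a) = (Gamma b)⁻¹ := by
    rw [zero_rpow ha.ne', mul_zero, ← mlKernel_one_right,
      mlKernel_eq_rlKernel_add ha b 0 one_pos, rlKernel_one_right, zero_mul, add_zero]
  have hcont : Continuous fun t : ℝ => ML a b (l * t ^ a) :=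
    (continuous_ML ha b).comp (continuous_const.mul (continuous_rpow_const ha.le))
  have hML : ∀ᶠ t : ℝ in 𝓝 0, 0 < ML a b (l * t ^ a) :=
    hcont.continuousAt.eventually_const_lt <| by
      simpa only [hzero, inv_pos] using Gamma_pos_of_pos hb
  filter_upwards [hML.filter_mono nhdsWithin_le_nhds, self_mem_nhdsWithin] with t hpos ht
  exact mul_pos (rpow_pos_of_pos ht _) hpos

lemma mlKernel_self_pos_of_neg (ha : 0 < a) (ha1 : a ≤ 1) {l : ℝ} (hl : l < 0) (ht : 0 < t) :
    0 < mlKernel a a l t := by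
  obtain ⟨w, hw, rfl⟩ : ∃ w, 0 < w ∧ l = -w := ⟨-l, neg_pos.2 hl, (neg_neg l).symm⟩
  have hlog : ConvexOn ℝ (Set.Ioi 0) (log ∘ fun t => w * rlKernel a t) :=
    ((convexOn_log_rlKernel ha ha1).add_const (log w)).congr fun t ht => by
      simp [log_mul hw.ne' (rlKernel_pos ha ht).ne', add_comm]
  have hpos := (isVolterraResolvent_mlKernel ha w).pos
    (fun t ht => mul_pos hw (rlKernel_pos ha ht)) hlog
    (fun t _ => (intervalIntegrable_rlKernel ha t).const_mul w)
    ((continuousOn_mlKernel ha a (-w)).const_mul w)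
    ((eventually_mlKernel_pos ha ha (-w)).mono fun t => mul_pos hw) ht
  exact pos_of_mul_pos_right hpos hw.le

lemma mlKernel_self_pos (ha : 0 < a) (ha1 : a ≤ 1) (l : ℝ) (ht : 0 < t) :
    0 < mlKernel a a l t := by
  rcases lt_or_ge l 0 with hl | hl
  · exact mlKernel_self_pos_of_neg ha ha1 hl ht
  · have hg (n : ℕ) : 0 < rlKernel (a * n + a) t := rlKernel_pos (by positivity) ht
    rw [← (hasSum_mlKernel ha a l ht).tsum_eq]
    exact (hasSum_mlKernel ha a l ht).summable.tsum_pos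
      (fun n => mul_nonneg (pow_nonneg hl n) (hg n).le) 0 (by simpa using hg 0)

lemma strictMono_ML_one (ha : 0 < a) (ha1 : a ≤ 1) : StrictMono (ML a 1) :=
  strictMono_of_hasDerivAt_pos (hasDerivAt_ML_one ha) fun z => by
    have := mlKernel_self_pos ha ha1 z one_pos
    rw [mlKernel_one_right] at this
    positivity

lemma ML_one_pos (ha : 0 < a) (ha1 : a ≤ 1) (z : ℝ) : 0 < ML a 1 z := by
  rw [← mlKernel_one_right]
  rcases ha1.eq_or_lt with rfl | ha1
  · exact mlKernel_self_pos one_pos le_rfl z one_pos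
  · have hc : 0 < 1 - a := sub_pos.2 ha1
    have hconv := integral_mlKernel_mul_rlKernel ha ha hc z one_pos
    rw [add_sub_cancel] at hconv
    rw [← hconv]
    exact intervalIntegral_pos_of_pos_on
      (intervalIntegrable_mlKernel_mul_rlKernel ha ha hc z one_pos)
      (fun s hs => mul_pos (mlKernel_self_pos ha ha1.le z hs.1) (rlKernel_pos hc (sub_pos.2 hs.2)))
      one_pos

-- `E_a(-w s^a)` is antitone in `s`, so its fractional integral of order `a` over `(0, 1)`, which is
-- `(1 - E_a(-w)) / w`, is at least `E_a(-w) / Γ(1 + a)`.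
lemma ML_one_neg_mul_le_one (ha : 0 < a) (ha1 : a ≤ 1) {w : ℝ} (hw : 0 ≤ w) :
    ML a 1 (-w) * (1 + w / Gamma (1 + a)) ≤ 1 := by
  have hanti : ∀ s ∈ Set.Ioo (0 : ℝ) 1, ML a 1 (-w) * (rlKernel 1 s * rlKernel a (1 - s)) ≤
      mlKernel a 1 (-w) s * rlKernel a (1 - s) := fun s hs => by
    have hs1 : s ^ a ≤ 1 := rpow_le_one hs.1.le hs.2.le ha.le
    rw [rlKernel_one, one_mul, mlKernel_one]
    exact mul_le_mul_of_nonneg_right ((strictMono_ML_one ha ha1).monotone (by nlinarith))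
      (rlKernel_pos ha (sub_pos.2 hs.2)).le
  have hlower : ML a 1 (-w) * (Gamma (1 + a))⁻¹ ≤ mlKernel a (1 + a) (-w) 1 := by
    rw [← rlKernel_one_right, ← integral_rlKernel_mul_rlKernel one_pos ha one_pos,
      ← integral_mlKernel_mul_rlKernel ha one_pos ha (-w) one_pos,
      ← intervalIntegral.integral_const_mul]
    exact integral_mono_on_of_le_Ioo zero_le_one
      ((intervalIntegrable_rlKernel_mul_rlKernel one_pos ha one_pos).const_mul _)
      (intervalIntegrable_mlKernel_mul_rlKernel ha one_pos ha (-w) one_pos) hanti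
  have hshift := mlKernel_eq_rlKernel_add ha 1 (-w) one_pos
  rw [mlKernel_one_right, rlKernel_one] at hshift
  calc ML a 1 (-w) * (1 + w / Gamma (1 + a))
      = ML a 1 (-w) + w * (ML a 1 (-w) * (Gamma (1 + a))⁻¹) := by ring
    _ ≤ ML a 1 (-w) + w * mlKernel a (1 + a) (-w) 1 := by gcongr
    _ = 1 := by linarith

lemma tendsto_ML_one_atBot (ha : 0 < a) (ha1 : a ≤ 1) : Tendsto (ML a 1) atBot (𝓝 0) := by
  have hG : 0 < Gamma (1 + a) := Gamma_pos_of_pos (by linarith)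
  have hlim : Tendsto (fun z : ℝ => (1 + -z / Gamma (1 + a))⁻¹) atBot (𝓝 0) :=
    (tendsto_atTop_add_const_left _ 1
      (tendsto_neg_atBot_atTop.atTop_div_const hG)).inv_tendsto_atTop
  refine squeeze_zero' (.of_forall fun z => (ML_one_pos ha ha1 z).le) ?_ hlim
  filter_upwards [eventually_le_atBot 0] with z hz
  have hw : 0 ≤ -z := neg_nonneg.2 hz
  rw [← one_div, le_div_iff₀ (by positivity)]
  simpa using ML_one_neg_mul_le_one ha ha1 hw

end Positivity

section CosineArches

variable {f : ℝ → ℝ} {x : ℝ}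

/-- The integral of `f |ξ| cos (x ξ)` over the `k`-th arch of `cos (x ξ)`, with the sign that makes
the cosine nonnegative there. Using `|ξ|` lets the arch `k = 0`, centred at the origin, be treated
like the others. -/
noncomputable def cosArch (f : ℝ → ℝ) (x : ℝ) (k : ℕ) : ℝ :=
  (-1) ^ k * ∫ ξ in ((2 * k - 1) * π / (2 * x))..((2 * k + 1) * π / (2 * x)), f |ξ| * cos (x * ξ)

lemma cosArch_eq_integral_shift (f : ℝ → ℝ) (hx : x ≠ 0) (k : ℕ) :
    cosArch f x k =
      ∫ ξ in -(π / (2 * x))..(π / (2 * x)), f |ξ + k * (π / x)| * cos (x * ξ) := by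
  have hcos (ξ : ℝ) : cos (x * (ξ + k * (π / x))) = (-1) ^ k * cos (x * ξ) := by
    rw [← cos_add_nat_mul_pi]
    congr 1
    field_simp
  have hsign : (-1 : ℝ) ^ k * (-1) ^ k = 1 := by simp [← mul_pow]
  have hshift := integral_comp_add_right (a := -(π / (2 * x))) (b := π / (2 * x))
    (fun ξ => f |ξ| * cos (x * ξ)) (k * (π / x))
  have hleft : -(π / (2 * x)) + k * (π / x) = (2 * k - 1) * π / (2 * x) := by
    field_simp
    ring
  have hright : π / (2 * x) + k * (π / x) = (2 * k + 1) * π / (2 * x) := by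
    field_simp
    ring
  rw [cosArch, ← hleft, ← hright, ← hshift, ← intervalIntegral.integral_const_mul]
  refine integral_congr fun ξ _ => ?_
  simp only [hcos]
  rw [mul_left_comm, ← mul_assoc ((-1 : ℝ) ^ k), hsign, one_mul]

lemma continuous_comp_abs (hf : ContinuousOn f (Set.Ici 0)) : Continuous fun ξ => f |ξ| :=
  hf.comp_continuous continuous_abs abs_nonneg

lemma cosArch_zero (hf : ContinuousOn f (Set.Ici 0)) (hx : 0 ≤ x) :
    cosArch f x 0 = 2 * ∫ ξ in 0..(π / (2 * x)), f ξ * cos (x * ξ) := by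
  have hcont : Continuous fun ξ => f |ξ| * cos (x * ξ) :=
    (continuous_comp_abs hf).mul (by fun_prop)
  have heven : ∫ ξ in -(π / (2 * x))..0, f |ξ| * cos (x * ξ) =
      ∫ ξ in 0..(π / (2 * x)), f |ξ| * cos (x * ξ) := by
    simpa using (integral_comp_neg (a := 0) (b := π / (2 * x))
      fun ξ => f |ξ| * cos (x * ξ)).symm
  have habs : ∫ ξ in 0..(π / (2 * x)), f |ξ| * cos (x * ξ) =
      ∫ ξ in 0..(π / (2 * x)), f ξ * cos (x * ξ) := by
    refine integral_congr fun ξ hξ => ?_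
    rw [Set.uIcc_of_le (by positivity)] at hξ
    simp only [abs_of_nonneg hξ.1]
  have hsplit := integral_add_adjacent_intervals (μ := volume)
    (hcont.intervalIntegrable (-(π / (2 * x))) 0) (hcont.intervalIntegrable 0 (π / (2 * x)))
  rw [heven, habs, ← two_mul] at hsplit
  simp [cosArch, neg_div, hsplit]

lemma cosArch_of_ne_zero (f : ℝ → ℝ) (hx : 0 ≤ x) {k : ℕ} (hk : k ≠ 0) :
    cosArch f x k =
      (-1) ^ k * ∫ ξ in ((2 * k - 1) * π / (2 * x))..((2 * k + 1) * π / (2 * x)),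
        f ξ * cos (x * ξ) := by
  have hk1 : (1 : ℝ) ≤ k := Nat.one_le_cast.2 (Nat.one_le_iff_ne_zero.2 hk)
  have hleft : 0 ≤ (2 * k - 1) * π / (2 * x) :=
    div_nonneg (mul_nonneg (by linarith) pi_pos.le) (by positivity)
  rw [cosArch]
  congr 1
  refine integral_congr fun ξ hξ => ?_
  rw [Set.uIcc_of_le (by gcongr; linarith)] at hξ
  simp only [abs_of_nonneg (hleft.trans hξ.1)]

lemma cos_mul_pos_of_mem_Ioo (hx : 0 < x) {ξ : ℝ}
    (hξ : ξ ∈ Set.Ioo (-(π / (2 * x))) (π / (2 * x))) : 0 < cos (x * ξ) := by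
  have hhalf : x * (π / (2 * x)) = π / 2 := by field_simp
  refine cos_pos_of_mem_Ioo ⟨?_, ?_⟩
  · rw [← hhalf, ← mul_neg]
    exact mul_lt_mul_of_pos_left hξ.1 hx
  · rw [← hhalf]
    exact mul_lt_mul_of_pos_left hξ.2 hx

lemma continuous_comp_abs_add_mul_cos (hf : ContinuousOn f (Set.Ici 0)) (x c : ℝ) :
    Continuous fun ξ => f |ξ + c| * cos (x * ξ) :=
  ((continuous_comp_abs hf).comp (continuous_add_const c)).mul (by fun_prop)

lemma cosArch_pos (hf : ContinuousOn f (Set.Ici 0)) (hpos : ∀ ξ, 0 ≤ ξ → 0 < f ξ) (hx : 0 < x)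
    (k : ℕ) : 0 < cosArch f x k := by
  have hhalf : 0 < π / (2 * x) := by positivity
  rw [cosArch_eq_integral_shift f hx.ne']
  exact intervalIntegral_pos_of_pos_on
    ((continuous_comp_abs_add_mul_cos hf x _).intervalIntegrable _ _)
    (fun ξ hξ => mul_pos (hpos _ (abs_nonneg _)) (cos_mul_pos_of_mem_Ioo hx hξ)) (by linarith)

lemma cosArch_succ_lt (hf : ContinuousOn f (Set.Ici 0)) (hanti : StrictAntiOn f (Set.Ici 0))
    (hx : 0 < x) (k : ℕ) : cosArch f x (k + 1) < cosArch f x k := by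
  have hhalf : 0 < π / (2 * x) := by positivity
  have hperiod : π / x = 2 * (π / (2 * x)) := by field_simp
  have hint (c : ℝ) : IntervalIntegrable (fun ξ => f |ξ + c| * cos (x * ξ)) volume
      (-(π / (2 * x))) (π / (2 * x)) :=
    (continuous_comp_abs_add_mul_cos hf x c).intervalIntegrable _ _
  have hlt : ∀ ξ ∈ Set.Ioo (-(π / (2 * x))) (π / (2 * x)),
      f |ξ + (k + 1 : ℕ) * (π / x)| * cos (x * ξ) < f |ξ + k * (π / x)| * cos (x * ξ) := by
    intro ξ hξ
    have hk : 0 ≤ k * (π / x) := by positivity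
    have habs : |ξ + k * (π / x)| < |ξ + (k + 1 : ℕ) * (π / x)| := by
      refine (abs_lt.2 ⟨?_, ?_⟩).trans_le (le_abs_self _) <;> push_cast <;> linarith [hξ.1]
    exact mul_lt_mul_of_pos_right
      (hanti (Set.mem_Ici.2 (abs_nonneg _)) (Set.mem_Ici.2 (abs_nonneg _)) habs)
      (cos_mul_pos_of_mem_Ioo hx hξ)
  rw [cosArch_eq_integral_shift f hx.ne', cosArch_eq_integral_shift f hx.ne', ← sub_pos,
    ← intervalIntegral.integral_sub (hint _) (hint _)]
  exact intervalIntegral_pos_of_pos_on ((hint _).sub (hint _)) (fun ξ hξ => sub_pos.2 (hlt ξ hξ))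
    (by linarith)

lemma abs_cosArch_le {M : ℝ} (hx : 0 < x) {k : ℕ}
    (hM : ∀ ξ, (2 * k - 1) * π / (2 * x) ≤ ξ → |f (|ξ|)| ≤ M) :
    |cosArch f x k| ≤ M * (π / x) := by
  have hle : (2 * k - 1) * π / (2 * x) ≤ (2 * k + 1) * π / (2 * x) := by gcongr; linarith
  have hlength : (2 * k + 1) * π / (2 * x) - (2 * k - 1) * π / (2 * x) = π / x := by
    field_simp
    ring
  have hbound := norm_integral_le_of_norm_le_const (C := M)
    (f := fun ξ => f |ξ| * cos (x * ξ)) fun ξ hξ => by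
      rw [Set.uIoc_of_le hle] at hξ
      rw [norm_mul]
      exact (mul_le_of_le_one_right (norm_nonneg _) (abs_cos_le_one _)).trans (hM ξ hξ.1.le)
  rw [hlength, abs_of_pos (by positivity)] at hbound
  simpa [cosArch, abs_mul] using hbound

lemma tendsto_cosArch (hf : Tendsto f atTop (𝓝 0)) (hx : 0 < x) :
    Tendsto (cosArch f x) atTop (𝓝 0) := by
  refine NormedAddGroup.tendsto_nhds_zero.2 fun ε hε => ?_
  have hδ : 0 < ε / 2 * (x / π) := by positivity
  have hsmall := eventually_forall_ge_atTop.2 <|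
    NormedAddGroup.tendsto_nhds_zero.1 (hf.comp tendsto_abs_atTop_atTop) _ hδ
  have hleft : Tendsto (fun k : ℕ => (2 * (k : ℝ) - 1) * π / (2 * x)) atTop atTop :=
    ((tendsto_atTop_add_const_right _ _ (tendsto_natCast_atTop_atTop.const_mul_atTop
      two_pos)).atTop_mul_const pi_pos).atTop_div_const (by positivity)
  filter_upwards [hleft.eventually hsmall] with k hk
  calc ‖cosArch f x k‖
      ≤ ε / 2 * (x / π) * (π / x) := abs_cosArch_le hx fun ξ hξ => (hk ξ hξ).le
    _ = ε / 2 := by field_simp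
    _ < ε := half_lt_self hε

end CosineArches

section MittagLefflerProfile

variable {α ϱ t : ℝ}

/-- The Fourier profile `ξ ↦ E_α(t^α (1 - ξ^{2ϱ}))` of `u_{α,ϱ}` at time `t`, meant for `ξ ≥ 0`;
the coefficients `a_k(t, x)` are, up to sign, its cosine integrals. -/
noncomputable def mlProfile (α ϱ t ξ : ℝ) : ℝ :=
  ML α 1 (t ^ α * (1 - ξ ^ (2 * ϱ)))

lemma continuous_mlProfile (hα : 0 < α) (hϱ : 0 ≤ ϱ) (t : ℝ) : Continuous (mlProfile α ϱ t) :=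
  (continuous_ML hα 1).comp
    (continuous_const.mul (continuous_const.sub (continuous_rpow_const (by positivity))))

lemma mlProfile_pos (hα : 0 < α) (hα1 : α ≤ 1) (ϱ t ξ : ℝ) : 0 < mlProfile α ϱ t ξ :=
  ML_one_pos hα hα1 _

lemma strictAntiOn_mlProfile (hα : 0 < α) (hα1 : α ≤ 1) (hϱ : 0 < ϱ) (ht : 0 < t) :
    StrictAntiOn (mlProfile α ϱ t) (Set.Ici 0) := fun ξ hξ η _ hξη =>
  strictMono_ML_one hα hα1 <| mul_lt_mul_of_pos_left
    (sub_lt_sub_left (rpow_lt_rpow hξ hξη (by positivity)) 1) (rpow_pos_of_pos ht α)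

lemma tendsto_mlProfile_atTop (hα : 0 < α) (hα1 : α ≤ 1) (hϱ : 0 < ϱ) (ht : 0 < t) :
    Tendsto (mlProfile α ϱ t) atTop (𝓝 0) :=
  (tendsto_ML_one_atBot hα hα1).comp <| Tendsto.const_mul_atBot (rpow_pos_of_pos ht α) <|
    tendsto_atBot_add_const_left _ 1 <| tendsto_neg_atTop_atBot.comp <|
      tendsto_rpow_atTop (by positivity)

lemma aCoef_eq_cosArch (α ϱ t : ℝ) {x : ℝ} (hx : 0 ≤ x) {k : ℕ} (hk : k ≠ 0) :
    aCoef α ϱ t x k = cosArch (mlProfile α ϱ t) x k := by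
  rw [cosArch_of_ne_zero _ hx hk, aCoef, if_neg hk]
  rfl

lemma two_mul_aCoef_zero (hα : 0 < α) (hϱ : 0 ≤ ϱ) (t : ℝ) {x : ℝ} (hx : 0 ≤ x) :
    2 * aCoef α ϱ t x 0 = cosArch (mlProfile α ϱ t) x 0 := by
  rw [cosArch_zero (continuous_mlProfile hα hϱ t).continuousOn hx, aCoef, if_pos rfl]
  rfl

end MittagLefflerProfile

theorem stmt15_general (α ϱ t x : ℝ) (hα : α ∈ Set.Ioc (0 : ℝ) 1) (hϱ : 0 < ϱ)
    (ht : 0 < t) (hx : 0 < x) :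
    (∀ k : ℕ, 0 < aCoef α ϱ t x k) ∧
    Tendsto (fun k : ℕ => aCoef α ϱ t x k) atTop (nhds 0) ∧
    (∀ k : ℕ, 1 ≤ k → aCoef α ϱ t x (k + 1) < aCoef α ϱ t x k) ∧
    aCoef α ϱ t x 1 < 2 * aCoef α ϱ t x 0 := by
  have hcont := (continuous_mlProfile hα.1 hϱ.le t).continuousOn (s := Set.Ici 0)
  have hpos := cosArch_pos hcont (fun ξ _ => mlProfile_pos hα.1 hα.2 ϱ t ξ) hx
  have hlt := cosArch_succ_lt hcont (strictAntiOn_mlProfile hα.1 hα.2 hϱ ht) hx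
  have hlim := tendsto_cosArch (tendsto_mlProfile_atTop hα.1 hα.2 hϱ ht) hx
  have hzero := two_mul_aCoef_zero hα.1 hϱ.le t hx.le
  have hsucc {k : ℕ} (hk : k ≠ 0) := aCoef_eq_cosArch α ϱ t hx.le hk
  refine ⟨fun k => ?_, ?_, fun k hk => ?_, ?_⟩
  · rcases eq_or_ne k 0 with rfl | hk
    · linarith [hpos 0]
    · exact hsucc hk ▸ hpos k
  · refine hlim.congr' ?_
    filter_upwards [eventually_ne_atTop 0] with k hk using (hsucc hk).symm
  · rw [hsucc k.succ_ne_zero, hsucc (by lia)]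
    exact hlt k
  · rw [hsucc one_ne_zero, hzero]
    exact hlt 0

theorem stmt15 (α ϱ t x : ℝ) (hα : α ∈ Set.Ioo (0 : ℝ) 1) (hϱ : 1 ≤ ϱ)
    (ht : 0 < t) (hx : 0 < x) :
    (∀ k : ℕ, 0 < aCoef α ϱ t x k) ∧
    Tendsto (fun k : ℕ => aCoef α ϱ t x k) atTop (nhds 0) ∧
    (∀ k : ℕ, 1 ≤ k → aCoef α ϱ t x (k + 1) < aCoef α ϱ t x k) ∧
    aCoef α ϱ t x 1 < 2 * aCoef α ϱ t x 0 :=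
  stmt15_general α ϱ t x ⟨hα.1, hα.2.le⟩ (by linarith) ht hx
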